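/- For every real s > 1 and every real r with 0 < r < 1, the function f(p) = (1/(ζ(s)Γ(s)(1-p)^r)) · [ (s-1) ∫_p^1 (ω-p)^(r-1) (-ln ω)^(s-2) / ω^r dω + (r-1) ∫_p^1 (ω-p)^(r-1) (-ln ω)^(s-1) / ω^r dω ] tends to -∞ as p → 0⁺; consequently, there exists ε > 0 such that f(p) < 0 for all p ∈ (0, ε). In particular, f is a quasi-density (it assumes negative values) rather than a genuine probability density. -/

import Mathlib

open MeasureTheory

/-- The Riemann zeta function for real `s > 1`, defined as `∑_{x=0}^∞ (x+1)^(-s)`. -/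
noncomputable def zetaS (s : ℝ) : ℝ := ∑' x : ℕ, ((x : ℝ) + 1) ^ (-s)

/-!
Write `L ω = -log ω` and `I q p = ∫ ω in (p, 1), (ω - p) ^ (r - 1) * L ω ^ q / ω ^ r`. The
integrand is `(1 - p / ω) ^ (r - 1)` times the derivative of `-L ^ (q + 1) / (q + 1)`. As `r ≤ 1`,
the first factor is at least `1`, so `L p ^ (q + 1) / (q + 1) ≤ I q p`. Splitting the integral at
`ω = 2 * p` gives an upper bound of the same order. Hence `I (s - 2) = o(I (s - 1))` and
`I (s - 1) → ∞` as `p → 0⁺`, and the negative coefficient `r - 1` of `I (s - 1)` decides the limit.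
-/

open Set Filter Topology Asymptotics Real

lemma zetaS_pos {s : ℝ} (hs : 1 < s) : 0 < zetaS s := by
  have hsum : Summable fun x : ℕ => ((x : ℝ) + 1) ^ (-s) := by
    simpa only [Nat.cast_add_one] using
      (summable_nat_add_iff 1).2 (Real.summable_nat_rpow.2 (neg_lt_neg hs))
  exact hsum.tsum_pos (fun x => by positivity) 0 (by simp)

lemma isLittleO_rpow_rpow_atTop {a b : ℝ} (hab : a < b) :
    (fun x : ℝ => x ^ a) =o[atTop] fun x => x ^ b := by
  refine isLittleO_of_tendsto' ?_ ((tendsto_rpow_neg_atTop (sub_pos.2 hab)).congr' ?_)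
  · filter_upwards [eventually_gt_atTop 0] with x hx h
    exact absurd h (rpow_pos_of_pos hx b).ne'
  · filter_upwards [eventually_gt_atTop 0] with x hx
    rw [neg_sub, rpow_sub hx]

lemma tendsto_neg_log_nhdsGT_zero : Tendsto (fun p => -log p) (𝓝[>] 0) atTop :=
  tendsto_neg_atBot_atTop.comp tendsto_log_nhdsGT_zero

section ShiftedPower

variable {a p m : ℝ}

lemma integrableOn_sub_rpow (ha : -1 < a) (hpm : p ≤ m) :
    IntegrableOn (fun ω => (ω - p) ^ a) (Ioc p m) := by
  have h := (intervalIntegral.intervalIntegrable_rpow' (a := 0) (b := m - p) ha).comp_sub_right p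
  rwa [zero_add, sub_add_cancel, intervalIntegrable_iff_integrableOn_Ioc_of_le hpm] at h

lemma setIntegral_sub_rpow (ha : -1 < a) (hpm : p ≤ m) :
    ∫ ω in Ioc p m, (ω - p) ^ a = (m - p) ^ (a + 1) / (a + 1) := by
  rw [← intervalIntegral.integral_of_le hpm,
    intervalIntegral.integral_comp_sub_right (fun ω => ω ^ a) p, sub_self,
    integral_rpow (Or.inl ha), zero_rpow (by linarith), sub_zero]

end ShiftedPower

section LogPower

variable {q p ω : ℝ}

lemma neg_log_pos (hω : 0 < ω) (hω1 : ω < 1) : 0 < -log ω :=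
  neg_pos.2 (log_neg hω hω1)

lemma neg_log_rpow_le_div {m : ℝ} (hq : -1 ≤ q) (hp : 0 < p) (hpω : p ≤ ω) (hωm : ω ≤ m)
    (hm : m < 1) : (-log ω) ^ q ≤ (-log p) ^ (q + 1) / -log m := by
  have hω : 0 < ω := hp.trans_le hpω
  have hq1 : 0 ≤ q + 1 := by linarith
  have hlogm := neg_log_pos (hω.trans_le hωm) hm
  have hlogω := neg_log_pos hω (hωm.trans_lt hm)
  have hlogp := neg_log_pos hp ((hpω.trans hωm).trans_lt hm)
  -- Passing to the exponent `q + 1 ≥ 0` avoids distinguishing the sign of `q`.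
  calc (-log ω) ^ q = (-log ω) ^ (q + 1) / -log ω := by
        rw [rpow_add_one hlogω.ne', mul_div_cancel_right₀ _ hlogω.ne']
    _ ≤ (-log p) ^ (q + 1) / -log m := by gcongr

lemma hasDerivAt_neg_log_rpow (hq : q + 1 ≠ 0) (hω : 0 < ω) (hω1 : ω < 1) :
    HasDerivAt (fun ω => -((-log ω) ^ (q + 1) / (q + 1))) ((-log ω) ^ q / ω) ω := by
  have h := (((hasDerivAt_log hω.ne').fun_neg.rpow_const (p := q + 1)
    (Or.inl (neg_log_pos hω hω1).ne')).div_const (q + 1)).fun_neg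
  refine h.congr_deriv ?_
  rw [add_sub_cancel_right]
  field_simp

lemma continuousOn_neg_log_rpow {m : ℝ} (hq : 0 ≤ q) (hp : 0 < p) :
    ContinuousOn (fun ω => (-log ω) ^ q) (Icc p m) :=
  (continuousOn_log.mono fun _ hω => (hp.trans_le hω.1).ne').neg.rpow_const
    fun _ _ => Or.inr hq

lemma integrableOn_neg_log_rpow_div (hq : -1 < q) (hp : 0 < p) :
    IntegrableOn (fun ω => (-log ω) ^ q / ω) (Ioc p 1) :=
  intervalIntegral.integrableOn_deriv_of_nonneg
    ((continuousOn_neg_log_rpow (by linarith) hp).div_const (q + 1)).neg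
    (fun _ hω => hasDerivAt_neg_log_rpow (by linarith) (hp.trans hω.1) hω.2)
    (fun _ hω => div_nonneg (rpow_nonneg (neg_log_pos (hp.trans hω.1) hω.2).le q)
      (hp.trans hω.1).le)

lemma setIntegral_neg_log_rpow_div (hq : -1 < q) (hp : 0 < p) (hp1 : p ≤ 1) :
    ∫ ω in Ioo p 1, (-log ω) ^ q / ω = (-log p) ^ (q + 1) / (q + 1) := by
  have hq0 : q + 1 ≠ 0 := by linarith
  rw [← integral_Ioc_eq_integral_Ioo, ← intervalIntegral.integral_of_le hp1,
    intervalIntegral.integral_eq_sub_of_hasDerivAt_of_le hp1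
      ((continuousOn_neg_log_rpow (by linarith) hp).div_const (q + 1)).neg
      (fun _ hω => hasDerivAt_neg_log_rpow hq0 (hp.trans hω.1) hω.2)
      ((intervalIntegrable_iff_integrableOn_Ioc_of_le hp1).2
        (integrableOn_neg_log_rpow_div hq hp))]
  simp [zero_rpow hq0]

end LogPower

/-- The integrand `(ω - p) ^ (r - 1) * (-log ω) ^ q / ω ^ r` of the two integrals in the mixing
quasi-density, where it occurs with `q = s - 2` and `q = s - 1`. -/
noncomputable def mixingIntegrand (r q p ω : ℝ) : ℝ :=
  (ω - p) ^ (r - 1) * (-log ω) ^ q / ω ^ r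

/-- The integral of `mixingIntegrand r q p` over `(p, 1)`, as a function of the lower endpoint
`p`; the mixing quasi-density is a multiple of a linear combination of two of these. -/
noncomputable def mixingIntegral (r q p : ℝ) : ℝ :=
  ∫ ω in Ioo p 1, mixingIntegrand r q p ω

section MixingIntegral

variable {r q p m ω : ℝ}

lemma mixingIntegrand_eq_mul_div (hω : 0 < ω) (hpω : p ≤ ω) :
    mixingIntegrand r q p ω = (1 - p / ω) ^ (r - 1) * ((-log ω) ^ q / ω) := by
  rw [mixingIntegrand, one_sub_div hω.ne', div_rpow (sub_nonneg.2 hpω) hω.le,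
    rpow_sub_one hω.ne' r]
  field_simp

lemma mixingIntegral_nonneg (hp : 0 < p) : 0 ≤ mixingIntegral r q p :=
  setIntegral_nonneg measurableSet_Ioo fun ω ⟨hpω, hω1⟩ => by
    have hω : 0 < ω := hp.trans hpω
    have : 0 < ω - p := sub_pos.2 hpω
    have := neg_log_pos hω hω1
    rw [mixingIntegrand]
    positivity

lemma integrableOn_mixingIntegrand_Ioc (hr : 0 < r) (hp : 0 < p) (hpm : p ≤ m) (hm : m < 1) :
    IntegrableOn (mixingIntegrand r q p) (Ioc p m) := by
  have hcont : ContinuousOn (fun ω => (-log ω) ^ q / ω ^ r) (Icc p m) := fun ω hω => by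
    have hω0 : 0 < ω := hp.trans_le hω.1
    have hlog := neg_log_pos hω0 (hω.2.trans_lt hm)
    exact (((continuousAt_log hω0.ne').neg.rpow_const (Or.inl hlog.ne')).div
      (continuousAt_id.rpow_const (Or.inl hω0.ne'))
      (rpow_pos_of_pos hω0 r).ne').continuousWithinAt
  have hpow := (integrableOn_Icc_iff_integrableOn_Ioc (by simp)).2
    (integrableOn_sub_rpow (by linarith : -1 < r - 1) hpm)
  exact ((hpow.mul_continuousOn hcont isCompact_Icc).mono_set Ioc_subset_Icc_self).congr_fun
    (fun _ _ => (mul_div_assoc _ _ _).symm) measurableSet_Ioc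

lemma integrableOn_mixingIntegrand_Ioo (hq : -1 < q) (hp : 0 < p) (hpm : p < m) :
    IntegrableOn (mixingIntegrand r q p) (Ioo m 1) := by
  have hm : 0 < m := hp.trans hpm
  have hcont : ContinuousOn (fun ω => (1 - p / ω) ^ (r - 1)) (Icc m 1) := fun ω hω => by
    have hω0 : 0 < ω := hm.trans_le hω.1
    have hfac : 0 < 1 - p / ω := sub_pos.2 ((div_lt_one hω0).2 (hpm.trans_le hω.1))
    exact ((continuousAt_const.sub (continuousAt_const.div continuousAt_id hω0.ne')).rpow_const
      (Or.inl hfac.ne')).continuousWithinAt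
  have hlog := (integrableOn_Icc_iff_integrableOn_Ioc (by simp)).2
    (integrableOn_neg_log_rpow_div hq hm)
  exact ((hlog.continuousOn_mul hcont isCompact_Icc).mono_set Ioo_subset_Icc_self).congr_fun
    (fun _ hω => (mixingIntegrand_eq_mul_div (hm.trans hω.1) (hpm.trans hω.1).le).symm)
    measurableSet_Ioo

lemma mixingIntegral_eq_add (hr : 0 < r) (hq : -1 < q) (hp : 0 < p) (hpm : p < m) (hm : m < 1) :
    mixingIntegral r q p =
      (∫ ω in Ioc p m, mixingIntegrand r q p ω) + ∫ ω in Ioo m 1, mixingIntegrand r q p ω := by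
  have hdisj : Disjoint (Ioc p m) (Ioo m 1) :=
    disjoint_left.2 fun _ h h' => h.2.not_gt h'.1
  rw [mixingIntegral, ← Ioc_union_Ioo_eq_Ioo hpm.le hm,
    setIntegral_union hdisj measurableSet_Ioo
      (integrableOn_mixingIntegrand_Ioc hr hp hpm.le hm)
      (integrableOn_mixingIntegrand_Ioo hq hp hpm)]

lemma integrableOn_mixingIntegrand (hr : 0 < r) (hq : -1 < q) (hp : 0 < p) (hp1 : p < 1) :
    IntegrableOn (mixingIntegrand r q p) (Ioo p 1) := by
  obtain ⟨m, hpm, hm⟩ := exists_between hp1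
  rw [← Ioc_union_Ioo_eq_Ioo hpm.le hm]
  exact (integrableOn_mixingIntegrand_Ioc hr hp hpm.le hm).union
    (integrableOn_mixingIntegrand_Ioo hq hp hpm)

lemma le_mixingIntegral (hr : 0 < r) (hr1 : r ≤ 1) (hq : -1 < q) (hp : 0 < p) (hp1 : p < 1) :
    (-log p) ^ (q + 1) / (q + 1) ≤ mixingIntegral r q p := by
  rw [← setIntegral_neg_log_rpow_div hq hp hp1.le]
  refine setIntegral_mono_on
    ((integrableOn_neg_log_rpow_div hq hp).mono_set Ioo_subset_Ioc_self)
    (integrableOn_mixingIntegrand hr hq hp hp1) measurableSet_Ioo fun ω ⟨hpω, hω1⟩ => ?_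
  have hω : 0 < ω := hp.trans hpω
  have hlog := neg_log_pos hω hω1
  rw [mixingIntegrand_eq_mul_div hω hpω.le]
  have hfac : 1 ≤ (1 - p / ω) ^ (r - 1) :=
    one_le_rpow_of_pos_of_le_one_of_nonpos (sub_pos.2 ((div_lt_one hω).2 hpω))
      (sub_le_self 1 (by positivity)) (by linarith)
  exact le_mul_of_one_le_left (by positivity) hfac

lemma setIntegral_mixingIntegrand_Ioc_le (hr : 0 < r) (hq : -1 ≤ q) (hp : 0 < p) (hpm : p ≤ m)
    (hm : m < 1) :
    ∫ ω in Ioc p m, mixingIntegrand r q p ω ≤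
      (m - p) ^ r / r * ((-log p) ^ (q + 1) / -log m / p ^ r) := by
  have hr1 : -1 < r - 1 := by linarith
  calc ∫ ω in Ioc p m, mixingIntegrand r q p ω
      ≤ ∫ ω in Ioc p m, (ω - p) ^ (r - 1) * ((-log p) ^ (q + 1) / -log m / p ^ r) := by
        refine setIntegral_mono_on (integrableOn_mixingIntegrand_Ioc hr hp hpm hm)
          ((integrableOn_sub_rpow hr1 hpm).mul_const _) measurableSet_Ioc fun ω ⟨hpω, hωm⟩ => ?_
        have : 0 < ω := hp.trans hpω
        have : 0 ≤ ω - p := sub_nonneg.2 hpω.le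
        have hlogm := neg_log_pos (hp.trans_le hpm) hm
        have hlogp := neg_log_pos hp (hpm.trans_lt hm)
        have hlog_le := neg_log_rpow_le_div hq hp hpω.le hωm hm
        rw [mixingIntegrand, mul_div_assoc]
        gcongr
    _ = (m - p) ^ r / r * ((-log p) ^ (q + 1) / -log m / p ^ r) := by
        rw [integral_mul_const, setIntegral_sub_rpow hr1 hpm, sub_add_cancel]

lemma setIntegral_mixingIntegrand_Ioo_le (hr1 : r ≤ 1) (hq : -1 < q) (hp : 0 < p) (hpm : p < m)
    (hm : m ≤ 1) :
    ∫ ω in Ioo m 1, mixingIntegrand r q p ω ≤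
      (1 - p / m) ^ (r - 1) * ((-log m) ^ (q + 1) / (q + 1)) := by
  have hm0 : 0 < m := hp.trans hpm
  rw [← setIntegral_neg_log_rpow_div hq hm0 hm, ← integral_const_mul]
  refine setIntegral_mono_on (integrableOn_mixingIntegrand_Ioo hq hp hpm)
    (((integrableOn_neg_log_rpow_div hq hm0).mono_set Ioo_subset_Ioc_self).const_mul _)
    measurableSet_Ioo fun ω ⟨hmω, hω1⟩ => ?_
  have hω : 0 < ω := hm0.trans hmω
  have hlog := neg_log_pos hω hω1
  rw [mixingIntegrand_eq_mul_div hω (hpm.trans hmω).le]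
  refine mul_le_mul_of_nonneg_right (rpow_le_rpow_of_nonpos ?_ ?_ (by linarith)) (by positivity)
  · exact sub_pos.2 ((div_lt_one hm0).2 hpm)
  · gcongr

lemma mixingIntegral_le (hr : 0 < r) (hr1 : r ≤ 1) (hq : -1 < q) (hp : 0 < p) (hp4 : p ≤ 1 / 4) :
    mixingIntegral r q p ≤
      ((r * log 2)⁻¹ + (1 / 2) ^ (r - 1) / (q + 1)) * (-log p) ^ (q + 1) := by
  have hq1 : 0 < q + 1 := by linarith
  have hpm : p < 2 * p := by linarith
  have hlog2 : 0 < log 2 := log_pos one_lt_two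
  have hlogp : log p < 0 := log_neg hp (by linarith)
  have hlog_two_mul : -log (2 * p) ≤ -log p := neg_le_neg (log_le_log hp hpm.le)
  have hlog_ge : log 2 ≤ -log (2 * p) := by
    rw [← log_inv]
    exact log_le_log two_pos ((le_inv_comm₀ two_pos (by positivity)).2 (by linarith))
  have hhead : ∫ ω in Ioc p (2 * p), mixingIntegrand r q p ω ≤
      (r * log 2)⁻¹ * (-log p) ^ (q + 1) :=
    calc ∫ ω in Ioc p (2 * p), mixingIntegrand r q p ω
        ≤ (2 * p - p) ^ r / r * ((-log p) ^ (q + 1) / -log (2 * p) / p ^ r) :=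
          setIntegral_mixingIntegrand_Ioc_le hr hq.le hp hpm.le (by linarith)
      _ ≤ p ^ r / r * ((-log p) ^ (q + 1) / log 2 / p ^ r) := by
          have : 0 ≤ -log p := by linarith
          rw [two_mul, add_sub_cancel_right, ← two_mul]
          gcongr
      _ = (r * log 2)⁻¹ * (-log p) ^ (q + 1) := by field_simp
  have htail : ∫ ω in Ioo (2 * p) 1, mixingIntegrand r q p ω ≤
      (1 / 2) ^ (r - 1) / (q + 1) * (-log p) ^ (q + 1) :=
    calc ∫ ω in Ioo (2 * p) 1, mixingIntegrand r q p ω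
        ≤ (1 - p / (2 * p)) ^ (r - 1) * ((-log (2 * p)) ^ (q + 1) / (q + 1)) :=
          setIntegral_mixingIntegrand_Ioo_le hr1 hq hp hpm (by linarith)
      _ ≤ (1 / 2) ^ (r - 1) * ((-log p) ^ (q + 1) / (q + 1)) := by
          have : 0 ≤ -log (2 * p) := by linarith
          rw [show 1 - p / (2 * p) = 1 / 2 by field_simp; norm_num]
          gcongr
      _ = (1 / 2) ^ (r - 1) / (q + 1) * (-log p) ^ (q + 1) := by ring
  rw [mixingIntegral_eq_add hr hq hp hpm (by linarith), add_mul]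
  exact add_le_add hhead htail

lemma isTheta_mixingIntegral (hr : 0 < r) (hr1 : r ≤ 1) (hq : -1 < q) :
    mixingIntegral r q =Θ[𝓝[>] 0] fun p => (-log p) ^ (q + 1) := by
  have hsmall : ∀ᶠ p : ℝ in 𝓝[>] 0, p ∈ Ioc 0 (1 / 4) := Ioc_mem_nhdsGT (by norm_num)
  have hlog : ∀ p ∈ Ioc (0 : ℝ) (1 / 4), 0 ≤ (-log p) ^ (q + 1) := fun p hp =>
    rpow_nonneg (neg_log_pos hp.1 (hp.2.trans_lt (by norm_num))).le _
  constructor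
  · refine IsBigO.of_bound ((r * log 2)⁻¹ + (1 / 2) ^ (r - 1) / (q + 1)) ?_
    filter_upwards [hsmall] with p hp
    rw [norm_of_nonneg (hlog p hp), norm_of_nonneg (mixingIntegral_nonneg hp.1)]
    exact mixingIntegral_le hr hr1 hq hp.1 hp.2
  · refine IsBigO.of_bound (q + 1) ?_
    filter_upwards [hsmall] with p hp
    rw [norm_of_nonneg (hlog p hp), norm_of_nonneg (mixingIntegral_nonneg hp.1)]
    exact (div_le_iff₀' (by linarith)).1
      (le_mixingIntegral hr hr1 hq hp.1 (hp.2.trans_lt (by norm_num)))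

lemma tendsto_mixingIntegral_atTop (hr : 0 < r) (hr1 : r ≤ 1) (hq : -1 < q) :
    Tendsto (mixingIntegral r q) (𝓝[>] 0) atTop := by
  have hq1 : 0 < q + 1 := by linarith
  refine tendsto_atTop_mono' _ ?_
    (((tendsto_rpow_atTop hq1).comp tendsto_neg_log_nhdsGT_zero).atTop_div_const hq1)
  filter_upwards [Ioo_mem_nhdsGT one_pos] with p hp
  exact le_mixingIntegral hr hr1 hq hp.1 hp.2

lemma isLittleO_mixingIntegral {q' : ℝ} (hr : 0 < r) (hr1 : r ≤ 1) (hq : -1 < q) (hqq' : q < q') :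
    mixingIntegral r q =o[𝓝[>] 0] mixingIntegral r q' :=
  ((isTheta_mixingIntegral hr hr1 hq).1.trans_isLittleO
    ((isLittleO_rpow_rpow_atTop (add_lt_add_left hqq' 1)).comp_tendsto
      tendsto_neg_log_nhdsGT_zero)).trans_isBigO
    (isTheta_mixingIntegral hr hr1 (hq.trans hqq')).2

lemma tendsto_mixingIntegral_linearCombination_atBot {q' : ℝ} (hr : 0 < r) (hr1 : r ≤ 1)
    (hq : -1 < q) (hqq' : q < q') (a : ℝ) {b : ℝ} (hb : b < 0) :
    Tendsto (fun p => a * mixingIntegral r q p + b * mixingIntegral r q' p) (𝓝[>] 0) atBot := by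
  have hlittle : (fun p => a * mixingIntegral r q p) =o[𝓝[>] 0]
      fun p => b * mixingIntegral r q' p :=
    ((isLittleO_mixingIntegral hr hr1 hq hqq').const_mul_left a).trans_isBigO
      (isBigO_self_const_mul hb.ne _ _)
  exact (hlittle.add_isEquivalent .refl).symm.tendsto_atBot
    ((tendsto_mixingIntegral_atTop hr hr1 (hq.trans hqq')).const_mul_atTop_of_neg hb)

end MixingIntegral

lemma tendsto_one_div_mul_one_sub_rpow (c r : ℝ) :
    Tendsto (fun p : ℝ => 1 / (c * (1 - p) ^ r)) (𝓝 0) (𝓝 (1 / c)) := by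
  have hpow : ContinuousAt (fun p : ℝ => ((1 - p) ^ r)⁻¹) 0 :=
    ((continuousAt_const.sub continuousAt_id).rpow_const (by simp)).inv₀ (by simp)
  simpa [mul_comm] using (hpow.const_mul c⁻¹).tendsto

/-- For `s > 1` and `0 < r < 1`, the mixing quasi-density tends to `-∞` as
`p → 0⁺`, so it is negative on some interval `(0, ε)`; hence it is a
quasi-density rather than a genuine probability density. -/
theorem negBinomial_mixing_quasi_density_neg_near_zero (s : ℝ) (hs : 1 < s)
    (r : ℝ) (hr0 : 0 < r) (hr1 : r < 1) :
    Filter.Tendsto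
      (fun p : ℝ =>
        (1 / (zetaS s * Real.Gamma s * (1 - p) ^ r)) *
          ((s - 1) *
              (∫ ω in Set.Ioo p 1,
                (ω - p) ^ (r - 1) * (-Real.log ω) ^ (s - 2) / ω ^ r) +
            (r - 1) *
              (∫ ω in Set.Ioo p 1,
                (ω - p) ^ (r - 1) * (-Real.log ω) ^ (s - 1) / ω ^ r)))
      (nhdsWithin 0 (Set.Ioi 0)) Filter.atBot ∧
    ∃ ε > (0 : ℝ), ∀ p ∈ Set.Ioo (0 : ℝ) ε,
      (1 / (zetaS s * Real.Gamma s * (1 - p) ^ r)) *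
          ((s - 1) *
              (∫ ω in Set.Ioo p 1,
                (ω - p) ^ (r - 1) * (-Real.log ω) ^ (s - 2) / ω ^ r) +
            (r - 1) *
              (∫ ω in Set.Ioo p 1,
                (ω - p) ^ (r - 1) * (-Real.log ω) ^ (s - 1) / ω ^ r)) < 0 := by
  have hconst : 0 < 1 / (zetaS s * Real.Gamma s) :=
    one_div_pos.2 (mul_pos (zetaS_pos hs) (Gamma_pos_of_pos (by linarith)))
  have hlim := ((tendsto_one_div_mul_one_sub_rpow _ r).mono_left nhdsWithin_le_nhds).pos_mul_atBot
    hconst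
    (tendsto_mixingIntegral_linearCombination_atBot hr0 hr1.le (by linarith : -1 < s - 2)
      (by linarith : s - 2 < s - 1) (s - 1) (sub_neg.2 hr1))
  refine ⟨hlim, ?_⟩
  obtain ⟨ε, hε, hneg⟩ := mem_nhdsGT_iff_exists_Ioo_subset.1 (hlim.eventually_lt_atBot 0)
  exact ⟨ε, hε, fun p hp => hneg hp⟩
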